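/- Let k ≥ 3 and let A = (a₁, …, a_k) be k distinct points in ℝ², and let δ > 0. Then the limit of H(n, A, δ)/C(n, k) as n → ∞ exists and is at least k!/(k^k − k). -/

import Mathlib

open scoped Classical

noncomputable section

abbrev Plane := EuclideanSpace ℝ (Fin 2)

/-- The `k`-element set `B` is δ-similar to the configuration `A = (a₁, …, a_k)`:
`B` can be enumerated as `b₁, …, b_k` so that for some `λ > 0` and all `i ≠ j`,
`1 - δ ≤ λ·dist(aᵢ, aⱼ)/dist(bᵢ, bⱼ) ≤ 1 + δ`. -/
def DeltaSimilar {k : ℕ} (A : Fin k → Plane) (δ : ℝ) (B : Finset Plane) : Prop :=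
  ∃ b : Fin k → Plane, Function.Injective b ∧ (B : Set Plane) = Set.range b ∧
    ∃ l : ℝ, 0 < l ∧ ∀ i j : Fin k, i ≠ j →
      1 - δ ≤ l * dist (A i) (A j) / dist (b i) (b j) ∧
      l * dist (A i) (A j) / dist (b i) (b j) ≤ 1 + δ

/-- `HGeo A δ n` = maximum over `n`-point planar sets `P` of the number of
`k`-element subsets of `P` that are δ-similar to `A`. -/
noncomputable def HGeo {k : ℕ} (A : Fin k → Plane) (δ : ℝ) (n : ℕ) : ℕ :=
  sSup {m | ∃ P : Finset Plane, P.card = n ∧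
    Set.ncard {B : Finset Plane | B ⊆ P ∧ B.card = k ∧ DeltaSimilar A δ B} = m}

/-!
Call a finite set of points an edge if it is `δ`-similar to `A`. Averaging over the deletion of one
vertex shows that the maximal edge density of a `k`-uniform hypergraph on `n` vertices decreases
with `n`, hence converges to some `L`.

For the lower bound, replace each point of `A` by a tiny homothetic copy of an optimal `n`-point
set. Each of the `k` copies keeps its own edges, and each of the `n ^ k` transversals is a small
perturbation of `A`, hence an edge, so `n ^ k + k * H n ≤ H (k * n)`. Since `H n ~ L * n ^ k / k!`,
dividing by `n ^ k` gives `1 + k * (L / k!) ≤ k ^ k * (L / k!)`.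
-/

open Filter Finset Function Topology

section Hypergraph

variable {α : Type*} {𝓕 : Set (Finset α)} {k : ℕ}

/-- The edges of the hypergraph `𝓕` contained in the vertex set `P`. -/
def edgesIn (𝓕 : Set (Finset α)) (P : Finset α) : Finset (Finset α) :=
  {B ∈ P.powerset | B ∈ 𝓕}

/-- The extremal number of the hypergraph `𝓕`: the maximal number of edges spanned by `n` vertices.
It is `0` if there are fewer than `n` vertices in total. -/
def maxEdges (𝓕 : Set (Finset α)) (n : ℕ) : ℕ :=
  sSup {m | ∃ P : Finset α, #P = n ∧ #(edgesIn 𝓕 P) = m}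

theorem mem_edgesIn {P B : Finset α} : B ∈ edgesIn 𝓕 P ↔ B ⊆ P ∧ B ∈ 𝓕 := by
  simp [edgesIn]

theorem bddAbove_card_edgesIn (𝓕 : Set (Finset α)) (n : ℕ) :
    BddAbove {m | ∃ P : Finset α, #P = n ∧ #(edgesIn 𝓕 P) = m} := by
  refine ⟨2 ^ n, ?_⟩
  rintro _ ⟨P, rfl, rfl⟩
  exact (card_filter_le _ _).trans_eq (card_powerset P)

theorem card_edgesIn_le_maxEdges (𝓕 : Set (Finset α)) (P : Finset α) :
    #(edgesIn 𝓕 P) ≤ maxEdges 𝓕 #P :=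
  le_csSup (bddAbove_card_edgesIn 𝓕 #P) ⟨P, rfl, rfl⟩

theorem exists_card_edgesIn_eq_maxEdges [Infinite α] (𝓕 : Set (Finset α)) (n : ℕ) :
    ∃ P : Finset α, #P = n ∧ #(edgesIn 𝓕 P) = maxEdges 𝓕 n := by
  obtain ⟨P, hP⟩ := Infinite.exists_subset_card_eq α n
  have hne : {m | ∃ P : Finset α, #P = n ∧ #(edgesIn 𝓕 P) = m}.Nonempty := ⟨_, P, hP, rfl⟩
  exact Nat.sSup_mem hne (bddAbove_card_edgesIn 𝓕 n)

theorem maxEdges_succ_mul_le [Infinite α] (h𝓕 : 𝓕.Sized k) (n : ℕ) :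
    maxEdges 𝓕 (n + 1) * (n + 1 - k) ≤ (n + 1) * maxEdges 𝓕 n := by
  obtain ⟨P, hP, hmax⟩ := exists_card_edgesIn_eq_maxEdges 𝓕 (n + 1)
  rw [← hmax, ← hP]
  refine card_mul_le_card_mul (fun B p ↦ p ∉ B) (fun B hB ↦ ?_) fun p hp ↦ ?_
  · obtain ⟨hBP, hB⟩ := mem_edgesIn.1 hB
    rw [bipartiteAbove, filter_notMem_eq_sdiff, card_sdiff_of_subset hBP, h𝓕 hB]
  · have hcard : #(P.erase p) = n := by rw [card_erase_of_mem hp, hP, Nat.add_sub_cancel]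
    calc #(bipartiteBelow (fun B p ↦ p ∉ B) (edgesIn 𝓕 P) p)
        ≤ #(edgesIn 𝓕 (P.erase p)) := card_le_card fun B hB ↦ by
          obtain ⟨hB, hpB⟩ := mem_filter.1 hB
          obtain ⟨hBP, hB⟩ := mem_edgesIn.1 hB
          exact mem_edgesIn.2 ⟨subset_erase.2 ⟨hBP, hpB⟩, hB⟩
      _ ≤ maxEdges 𝓕 n := hcard ▸ card_edgesIn_le_maxEdges 𝓕 (P.erase p)

theorem antitoneOn_maxEdges_div_choose [Infinite α] (h𝓕 : 𝓕.Sized k) :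
    AntitoneOn (fun n : ℕ ↦ (maxEdges 𝓕 n : ℝ) / n.choose k) (Set.Ici k) := by
  refine antitoneOn_nat_Ici_of_succ_le fun n hn ↦ ?_
  have hchoose : (0 : ℝ) < n.choose k := mod_cast Nat.choose_pos hn
  have hchoose_succ : (0 : ℝ) < (n + 1).choose k := mod_cast Nat.choose_pos (by lia)
  have hpos : 0 < n + 1 - k := by lia
  rw [div_le_div_iff₀ hchoose_succ hchoose]
  norm_cast
  refine le_of_mul_le_mul_right ?_ hpos
  calc maxEdges 𝓕 (n + 1) * n.choose k * (n + 1 - k)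
      = maxEdges 𝓕 (n + 1) * (n + 1 - k) * n.choose k := by ring
    _ ≤ (n + 1) * maxEdges 𝓕 n * n.choose k :=
      Nat.mul_le_mul_right _ (maxEdges_succ_mul_le h𝓕 n)
    _ = maxEdges 𝓕 n * (n.choose k * (n + 1)) := by ring
    _ = maxEdges 𝓕 n * (n + 1).choose k * (n + 1 - k) := by
      rw [Nat.choose_mul_succ_eq, mul_assoc]

theorem exists_tendsto_maxEdges_div_choose [Infinite α] (h𝓕 : 𝓕.Sized k) :
    ∃ L : ℝ, Tendsto (fun n : ℕ ↦ (maxEdges 𝓕 n : ℝ) / n.choose k) atTop (𝓝 L) :=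
  ⟨_, Real.tendsto_atTop_csInf_of_antitoneOn_bddBelow_nat_Ici (antitoneOn_maxEdges_div_choose h𝓕)
    ⟨0, by rintro _ ⟨n, -, rfl⟩; positivity⟩⟩

end Hypergraph

section BlowUp

variable {ι α β : Type*} {φ : ι → α ↪ β} {P : Finset α} {𝒜 : Finset (Finset α)}

theorem index_eq_of_apply_eq (hφ : Pairwise (Disjoint on fun i ↦ P.map (φ i))) {i j : ι} {p q : α}
    (hp : p ∈ P) (hq : q ∈ P) (h : φ i p = φ j q) : i = j :=
  hφ.eq <| not_disjoint_iff.2 ⟨φ i p, mem_map_of_mem _ hp, h ▸ mem_map_of_mem _ hq⟩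

variable [Fintype ι]

/-- The union of the copies of `P` under the embeddings `φ i`, called the parts below. -/
def blowUp (φ : ι → α ↪ β) (P : Finset α) : Finset β :=
  univ.biUnion fun i ↦ P.map (φ i)

/-- The copies of members of `𝒜` inside the individual parts of a blow-up. -/
def partCopies (φ : ι → α ↪ β) (𝒜 : Finset (Finset α)) : Finset (Finset β) :=
  univ.biUnion fun i ↦ 𝒜.map (mapEmbedding (φ i)).toEmbedding

/-- The sets consisting of one point from each part of the blow-up of `P`. -/
def transversals (φ : ι → α ↪ β) (P : Finset α) : Finset (Finset β) :=
  (Fintype.piFinset fun _ ↦ P).image fun g ↦ univ.image fun i ↦ φ i (g i)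

theorem apply_mem_blowUp (i : ι) {p : α} (hp : p ∈ P) : φ i p ∈ blowUp φ P :=
  mem_biUnion.2 ⟨i, mem_univ i, mem_map_of_mem (φ i) hp⟩

theorem mem_partCopies {X : Finset β} : X ∈ partCopies φ 𝒜 ↔ ∃ i, ∃ B ∈ 𝒜, B.map (φ i) = X := by
  simp [partCopies]

theorem mem_transversals {X : Finset β} :
    X ∈ transversals φ P ↔ ∃ g : ι → α, (∀ i, g i ∈ P) ∧ univ.image (fun i ↦ φ i (g i)) = X := by
  simp [transversals]

theorem card_blowUp (hφ : Pairwise (Disjoint on fun i ↦ P.map (φ i))) :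
    #(blowUp φ P) = Fintype.card ι * #P := by
  rw [blowUp, card_biUnion fun i _ j _ hij ↦ hφ hij]
  simp

theorem card_partCopies (hφ : Pairwise (Disjoint on fun i ↦ P.map (φ i)))
    (h𝒜 : ∀ B ∈ 𝒜, B ⊆ P ∧ B.Nonempty) : #(partCopies φ 𝒜) = Fintype.card ι * #𝒜 := by
  rw [partCopies, card_biUnion]
  · simp
  · intro i _ j _ hij
    refine disjoint_left.2 fun X hXi hXj ↦ hij ?_
    obtain ⟨B, hB, rfl⟩ := mem_map.1 hXi
    obtain ⟨C, hC, hCB : C.map (φ j) = B.map (φ i)⟩ := mem_map.1 hXj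
    obtain ⟨hBP, x, hx⟩ := h𝒜 B hB
    obtain ⟨y, hy, hyx⟩ := mem_map.1 (hCB ▸ mem_map_of_mem (φ i) hx)
    exact (index_eq_of_apply_eq hφ ((h𝒜 C hC).1 hy) (hBP hx) hyx).symm

theorem card_transversals (hφ : Pairwise (Disjoint on fun i ↦ P.map (φ i))) :
    #(transversals φ P) = #P ^ Fintype.card ι := by
  rw [transversals, card_image_of_injOn, Fintype.card_piFinset, prod_const, card_univ]
  intro g hg g' hg' (hgg' : univ.image (fun i ↦ φ i (g i)) = univ.image fun i ↦ φ i (g' i))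
  rw [mem_coe, Fintype.mem_piFinset] at hg hg'
  funext i
  have hmem : φ i (g i) ∈ univ.image fun i ↦ φ i (g' i) :=
    hgg' ▸ mem_image_of_mem (fun i ↦ φ i (g i)) (mem_univ i)
  obtain ⟨j, -, hj⟩ := mem_image.1 hmem
  obtain rfl := index_eq_of_apply_eq hφ (hg' j) (hg i) hj
  exact ((φ j).injective hj).symm

theorem disjoint_transversals_partCopies [Nontrivial ι]
    (hφ : Pairwise (Disjoint on fun i ↦ P.map (φ i))) (h𝒜 : ∀ B ∈ 𝒜, B ⊆ P) :
    Disjoint (transversals φ P) (partCopies φ 𝒜) := by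
  refine disjoint_left.2 fun X hX hX' ↦ ?_
  obtain ⟨g, hg, rfl⟩ := mem_transversals.1 hX
  obtain ⟨i, B, hB, hBg⟩ := mem_partCopies.1 hX'
  obtain ⟨j, hj⟩ := exists_ne i
  have hmem : φ j (g j) ∈ B.map (φ i) :=
    hBg ▸ mem_image_of_mem (fun i ↦ φ i (g i)) (mem_univ j)
  obtain ⟨y, hy, hyj⟩ := mem_map.1 hmem
  exact hj (index_eq_of_apply_eq hφ (h𝒜 B hB hy) (hg j) hyj).symm

theorem card_pow_add_mul_card_edgesIn_le_maxEdges [Nontrivial ι] {𝓕 : Set (Finset α)}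
    {𝓖 : Set (Finset β)} (hφ : Pairwise (Disjoint on fun i ↦ P.map (φ i))) (h𝓕 : ∅ ∉ 𝓕)
    (hcopy : ∀ i, ∀ B ∈ 𝓕, B.map (φ i) ∈ 𝓖)
    (htransversal : ∀ g : ι → α, (∀ i, g i ∈ P) → univ.image (fun i ↦ φ i (g i)) ∈ 𝓖) :
    #P ^ Fintype.card ι + Fintype.card ι * #(edgesIn 𝓕 P) ≤ maxEdges 𝓖 (Fintype.card ι * #P) := by
  have hedge : ∀ B ∈ edgesIn 𝓕 P, B ⊆ P ∧ B.Nonempty := fun B hB ↦ by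
    obtain ⟨hBP, hB⟩ := mem_edgesIn.1 hB
    exact ⟨hBP, nonempty_iff_ne_empty.2 fun h ↦ h𝓕 (h ▸ hB)⟩
  rw [← card_transversals hφ, ← card_partCopies hφ hedge, ← card_blowUp hφ,
    ← card_union_of_disjoint (disjoint_transversals_partCopies hφ fun B hB ↦ (hedge B hB).1)]
  refine (card_le_card fun X hX ↦ ?_).trans (card_edgesIn_le_maxEdges 𝓖 _)
  rw [mem_edgesIn]
  rcases mem_union.1 hX with hX | hX
  · obtain ⟨g, hg, rfl⟩ := mem_transversals.1 hX
    exact ⟨image_subset_iff.2 fun i _ ↦ apply_mem_blowUp i (hg i), htransversal g hg⟩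
  · obtain ⟨i, B, hB, rfl⟩ := mem_partCopies.1 hX
    obtain ⟨hBP, hB⟩ := mem_edgesIn.1 hB
    exact ⟨map_subset_iff_subset_preimage.2 fun x hx ↦
      mem_preimage.2 (apply_mem_blowUp i (hBP hx)), hcopy i B hB⟩

end BlowUp

section SimilarCopies

variable {ι X : Type*} [MetricSpace X] {A : ι → X} {δ : ℝ} {B : Finset X}

/-- The finite sets that are `δ`-similar to the configuration `A`, which generalizes `DeltaSimilar`
to an arbitrary index type and an arbitrary metric space. -/
def similarCopies (A : ι → X) (δ : ℝ) : Set (Finset X) :=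
  {B | ∃ b : ι → X, Injective b ∧ (B : Set X) = Set.range b ∧
    ∃ l : ℝ, 0 < l ∧ ∀ i j : ι, i ≠ j →
      1 - δ ≤ l * dist (A i) (A j) / dist (b i) (b j) ∧
      l * dist (A i) (A j) / dist (b i) (b j) ≤ 1 + δ}

theorem empty_notMem_similarCopies [Nonempty ι] (A : ι → X) (δ : ℝ) : ∅ ∉ similarCopies A δ := by
  rintro ⟨b, -, hb, -⟩
  exact (Set.range_nonempty b).ne_empty (by rw [← hb, coe_empty])

theorem map_mem_similarCopies (f : X ≃ᵈ X) (hB : B ∈ similarCopies A δ) :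
    B.map f.toEquiv.toEmbedding ∈ similarCopies A δ := by
  obtain ⟨b, hb, hBb, l, hl, hbA⟩ := hB
  have hr : (0 : ℝ) < Dilation.ratio f := Dilation.ratio_pos f
  refine ⟨f ∘ b, f.injective.comp hb, ?_, Dilation.ratio f * l, mul_pos hr hl, fun i j hij ↦ ?_⟩
  · rw [coe_map, hBb, Set.range_comp]
    rfl
  · rw [comp_apply, comp_apply, Dilation.dist_eq, mul_assoc, mul_div_mul_left _ _ hr.ne']
    exact hbA i j hij

variable [Fintype ι]

theorem sized_similarCopies (A : ι → X) (δ : ℝ) :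
    (similarCopies A δ).Sized (Fintype.card ι) := by
  rintro B ⟨b, hb, hBb, -⟩
  rw [← Set.ncard_coe_finset, hBb, Set.ncard_range_of_injective hb, Nat.card_eq_fintype_card]

theorem eventually_image_mem_similarCopies (hA : Injective A) (hδ : 0 < δ) :
    ∀ᶠ b in 𝓝 A, univ.image b ∈ similarCopies A δ := by
  have hpair : ∀ i j, i ≠ j → ∀ᶠ b : ι → X in 𝓝 A, b i ≠ b j ∧
      dist (A i) (A j) / dist (b i) (b j) ∈ Set.Icc (1 - δ) (1 + δ) := fun i j hij ↦ by
    have hdist : dist (A i) (A j) ≠ 0 := dist_ne_zero.2 (hA.ne hij)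
    have hratio : Tendsto (fun b : ι → X ↦ dist (A i) (A j) / dist (b i) (b j)) (𝓝 A) (𝓝 1) := by
      rw [← div_self hdist]
      exact continuousAt_const.div (by fun_prop) hdist
    have hne : ∀ᶠ b : ι → X in 𝓝 A, b i ≠ b j :=
      (isOpen_ne_fun (continuous_apply i) (continuous_apply j)).mem_nhds (hA.ne hij)
    exact hne.and (hratio (Icc_mem_nhds (by linarith) (by linarith)))
  filter_upwards [eventually_all.2 fun i ↦ eventually_all.2 fun j ↦ eventually_imp_distrib_left.2
    (hpair i j)] with b hb
  refine ⟨b, fun i j hij ↦ by_contra fun hne ↦ (hb i j hne).1 hij, by simp, 1, one_pos,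
    fun i j hij ↦ ?_⟩
  simpa only [one_mul, Set.mem_Icc] using (hb i j hij).2

variable {E : Type*} [NormedAddCommGroup E] [NormedSpace ℝ E]

theorem tendsto_smul_add (x v : E) : Tendsto (fun ε : ℝ ↦ ε • x + v) (𝓝 0) (𝓝 v) := by
  have hcont : Continuous fun ε : ℝ ↦ ε • x + v := by fun_prop
  simpa using hcont.tendsto 0

theorem exists_separated_and_transversals_mem_similarCopies {A : ι → E} (hA : Injective A)
    (hδ : 0 < δ) (P : Finset E) :
    ∃ ε : ℝ, ε ≠ 0 ∧ (∀ i j, i ≠ j → ∀ p ∈ P, ∀ q ∈ P, ε • p + A i ≠ ε • q + A j) ∧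
      ∀ g : ι → E, (∀ i, g i ∈ P) → univ.image (fun i ↦ ε • g i + A i) ∈ similarCopies A δ := by
  have hseparated : ∀ᶠ ε : ℝ in 𝓝 0,
      ∀ i j, i ≠ j → ∀ p ∈ P, ∀ q ∈ P, ε • p + A i ≠ ε • q + A j := by
    simp only [eventually_all, eventually_all_finset]
    exact fun i j hij p _ q _ ↦ (isOpen_ne_fun (by fun_prop) (by fun_prop)).mem_nhds
      (by simpa using hA.ne hij)
  have htransversal : ∀ᶠ ε : ℝ in 𝓝 0, ∀ g ∈ Fintype.piFinset fun _ : ι ↦ P,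
      univ.image (fun i ↦ ε • g i + A i) ∈ similarCopies A δ :=
    (eventually_all_finset _).2 fun g _ ↦
      (tendsto_pi_nhds.2 fun i ↦ tendsto_smul_add (g i) (A i)).eventually
        (eventually_image_mem_similarCopies hA hδ)
  obtain ⟨ε, ⟨hsep, htrans⟩, hε⟩ := (((hseparated.and htransversal).filter_mono
    nhdsWithin_le_nhds).and (self_mem_nhdsWithin (s := {0}ᶜ))).exists
  exact ⟨ε, hε, hsep, fun g hg ↦ htrans g (Fintype.mem_piFinset.2 hg)⟩

theorem pow_add_mul_maxEdges_similarCopies_le [Nontrivial ι] [Infinite E] {A : ι → E}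
    (hA : Injective A) (hδ : 0 < δ) (n : ℕ) :
    n ^ Fintype.card ι + Fintype.card ι * maxEdges (similarCopies A δ) n ≤
      maxEdges (similarCopies A δ) (Fintype.card ι * n) := by
  obtain ⟨P, rfl, hmax⟩ := exists_card_edgesIn_eq_maxEdges (similarCopies A δ) n
  obtain ⟨ε, hε, hsep, htrans⟩ := exists_separated_and_transversals_mem_similarCopies hA hδ P
  rw [← hmax]
  refine card_pow_add_mul_card_edgesIn_le_maxEdges
    (φ := fun i ↦ (DilationEquiv.smulTorsor (A i) hε).toEquiv.toEmbedding) (fun i j hij ↦ ?_)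
    (empty_notMem_similarCopies A δ) (fun i B hB ↦ map_mem_similarCopies _ hB) htrans
  refine disjoint_left.2 fun x hxi hxj ↦ ?_
  obtain ⟨p, hp, rfl⟩ := mem_map.1 hxi
  obtain ⟨q, hq, hqp⟩ := mem_map.1 hxj
  exact hsep i j hij p hp q hq hqp.symm

end SimilarCopies

section Asymptotics

variable {h : ℕ → ℝ} {L : ℝ}

theorem tendsto_div_pow_of_tendsto_div_choose {k : ℕ}
    (hL : Tendsto (fun n ↦ h n / n.choose k) atTop (𝓝 L)) :
    Tendsto (fun n ↦ h n / (n : ℝ) ^ k) atTop (𝓝 (L / k.factorial)) := by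
  have hequiv : Tendsto (fun n ↦ h n / ((n : ℝ) ^ k / k.factorial)) atTop (𝓝 L) :=
    (Asymptotics.IsEquivalent.refl.div (isEquivalent_choose k)).tendsto_nhds hL
  refine (hequiv.div_const (k.factorial : ℝ)).congr fun n ↦ ?_
  rw [div_div, div_mul_cancel₀ _ (mod_cast k.factorial_ne_zero)]

theorem factorial_div_le_of_pow_add_mul_le {k m : ℕ} (hk : 2 ≤ k) (hm : 2 ≤ m)
    (hL : Tendsto (fun n ↦ h n / n.choose k) atTop (𝓝 L))
    (hrec : ∀ n : ℕ, (n : ℝ) ^ k + m * h n ≤ h (m * n)) :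
    (k.factorial : ℝ) / ((m : ℝ) ^ k - m) ≤ L := by
  have hc := tendsto_div_pow_of_tendsto_div_choose hL
  have hc_mul : Tendsto (fun n : ℕ ↦ (m : ℝ) ^ k * (h (m * n) / ((m * n : ℕ) : ℝ) ^ k)) atTop
      (𝓝 ((m : ℝ) ^ k * (L / k.factorial))) :=
    (hc.comp (tendsto_id.const_mul_atTop' (by lia))).const_mul _
  have hm_pow : (m : ℝ) ^ k ≠ 0 := by positivity
  have hlimit : 1 + m * (L / k.factorial) ≤ (m : ℝ) ^ k * (L / k.factorial) := by
    refine le_of_tendsto_of_tendsto ((hc.const_mul (m : ℝ)).const_add 1) hc_mul ?_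
    filter_upwards [eventually_gt_atTop 0] with n hn
    calc 1 + m * (h n / (n : ℝ) ^ k)
        = ((n : ℝ) ^ k + m * h n) / (n : ℝ) ^ k := by field_simp
      _ ≤ h (m * n) / (n : ℝ) ^ k := by gcongr; exact hrec n
      _ = (m : ℝ) ^ k * (h (m * n) / ((m * n : ℕ) : ℝ) ^ k) := by
        rw [Nat.cast_mul, mul_pow, mul_div_assoc', mul_div_mul_left _ _ hm_pow]
  have hpos : (0 : ℝ) < (m : ℝ) ^ k - m :=
    sub_pos.2 (lt_self_pow₀ (mod_cast hm) hk)
  have hfactorial : (0 : ℝ) < k.factorial := mod_cast k.factorial_pos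
  rw [div_le_iff₀ hpos, ← one_le_div₀ hfactorial]
  calc 1 ≤ (m : ℝ) ^ k * (L / k.factorial) - m * (L / k.factorial) := by linarith
    _ = L * ((m : ℝ) ^ k - m) / k.factorial := by ring

end Asymptotics

theorem HGeo_eq_maxEdges {k : ℕ} (A : Fin k → Plane) (δ : ℝ) (n : ℕ) :
    HGeo A δ n = maxEdges (similarCopies A δ) n := by
  have hedges : ∀ P : Finset Plane,
      {B : Finset Plane | B ⊆ P ∧ #B = k ∧ DeltaSimilar A δ B} =
        edgesIn (similarCopies A δ) P := fun P ↦ by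
    ext B
    have hcard : B ∈ similarCopies A δ → #B = k := fun hB ↦ by
      simpa using sized_similarCopies A δ hB
    rw [mem_coe, mem_edgesIn]
    exact ⟨fun ⟨hBP, _, hB⟩ ↦ ⟨hBP, hB⟩, fun ⟨hBP, hB⟩ ↦ ⟨hBP, hcard hB, hB⟩⟩
  simp only [HGeo, maxEdges, hedges, Set.ncard_coe_finset]

theorem stmt_19_general {ι E : Type*} [Fintype ι] [Nontrivial ι] [NormedAddCommGroup E]
    [NormedSpace ℝ E] {A : ι → E} (hA : Injective A) {δ : ℝ} (hδ : 0 < δ) :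
    ∃ L : ℝ, ((Fintype.card ι).factorial : ℝ) /
        ((Fintype.card ι : ℝ) ^ Fintype.card ι - Fintype.card ι) ≤ L ∧
      Tendsto (fun n : ℕ ↦ (maxEdges (similarCopies A δ) n : ℝ) / n.choose (Fintype.card ι))
        atTop (𝓝 L) := by
  have : Nontrivial E := hA.nontrivial
  have : Infinite E := Module.Free.infinite ℝ E
  obtain ⟨L, hL⟩ := exists_tendsto_maxEdges_div_choose (sized_similarCopies A δ)
  have hcard : 2 ≤ Fintype.card ι := Fintype.one_lt_card
  exact ⟨L, factorial_div_le_of_pow_add_mul_le hcard hcard hL fun n ↦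
    mod_cast pow_add_mul_maxEdges_similarCopies_le hA hδ n, hL⟩

/-- For any configuration `A` of `k ≥ 3` distinct planar points and any `δ > 0`,
`H(n, A, δ)/C(n, k)` converges as `n → ∞` to a limit that is at least
`k!/(k^k - k)`. -/
theorem stmt_19 (k : ℕ) (hk : 3 ≤ k) (A : Fin k → Plane)
    (hA : Function.Injective A) (δ : ℝ) (hδ : 0 < δ) :
    ∃ L : ℝ, (Nat.factorial k : ℝ) / ((k : ℝ) ^ k - (k : ℝ)) ≤ L ∧
      Filter.Tendsto (fun n : ℕ => (HGeo A δ n : ℝ) / (n.choose k : ℝ))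
        Filter.atTop (nhds L) := by
  have : Nontrivial (Fin k) := Fin.nontrivial_iff_two_le.2 (by lia)
  simpa only [HGeo_eq_maxEdges, Fintype.card_fin] using stmt_19_general hA hδ

end
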